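/- Let M ≥ 1, N ≥ 1, let B be a real N×N matrix with ‖B‖ ≤ 1, and let S be the M×M subdiagonal shift matrix. Then the matrix Ã = I_{MN} − S ⊗ B satisfies ‖Ã‖ ≤ 2 and ‖Ã⁻¹‖ ≤ M, and hence its condition number satisfies κ(Ã) = ‖Ã‖·‖Ã⁻¹‖ ≤ 2M. -/

import Mathlib

open Matrix
open scoped Kronecker

/-- The ℓ²→ℓ² operator (spectral) norm of a matrix. -/
noncomputable def specNorm {𝕜 : Type*} [RCLike 𝕜] {n : Type*} [Fintype n] [DecidableEq n]
    (A : Matrix n n 𝕜) : ℝ :=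
  ‖LinearMap.toContinuousLinearMap (Matrix.toEuclideanLin A)‖

/-- The M×M subdiagonal shift matrix: entry (i,j) is 1 if i = j+1 and 0 otherwise. -/
def shiftMatrix (M : ℕ) : Matrix (Fin M) (Fin M) ℝ :=
  Matrix.of fun i j => if (i : ℕ) = (j : ℕ) + 1 then 1 else 0

/-!
If `A ^ k = 0` and `A`, `B` are contractions, then `T = A ⊗ₖ B` is a contraction with `T ^ k = 0`.
Hence `‖1 - T‖ ≤ 1 + 1`, and `(1 - T)⁻¹` is the finite Neumann series `∑ i < k, T ^ i`, a sum of
`k` contractions. The shift `S` qualifies as `A` with `k = M`: it is strictly lower triangular, and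
`Sᴴ * S` is a diagonal matrix with entries in `{0, 1}`.
-/

section StrictlyTriangular

variable {R m : Type*} [Semiring R] [Fintype m] [DecidableEq m]

lemma pow_apply_eq_zero_of_strictly_triangular {A : Matrix m m R} (b : m → ℕ)
    (hA : ∀ i j, b i ≤ b j → A i j = 0) (k : ℕ) {i j : m} (hij : b i < b j + k) :
    (A ^ k) i j = 0 := by
  induction k generalizing j with
  | zero => exact one_apply_ne fun h => by simp [h] at hij
  | succ k ih =>
    rw [pow_succ, mul_apply]
    refine Finset.sum_eq_zero fun l _ => ?_
    rcases le_or_gt (b l) (b j) with hlj | hjl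
    · rw [hA l j hlj, mul_zero]
    · rw [ih (by omega), zero_mul]

lemma pow_eq_zero_of_strictly_triangular {A : Matrix m m R} (b : m → ℕ)
    (hA : ∀ i j, b i ≤ b j → A i j = 0) {k : ℕ} (hb : ∀ i, b i < k) : A ^ k = 0 := by
  ext i j
  exact pow_apply_eq_zero_of_strictly_triangular b hA k (by have := hb i; omega)

end StrictlyTriangular

lemma kronecker_pow {R m n : Type*} [CommSemiring R] [Fintype m] [DecidableEq m] [Fintype n]
    [DecidableEq n] (A : Matrix m m R) (B : Matrix n n R) (k : ℕ) :
    (A ⊗ₖ B) ^ k = (A ^ k) ⊗ₖ (B ^ k) := by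
  induction k with
  | zero => simp only [pow_zero, one_kronecker_one]
  | succ k ih => simp only [pow_succ, ih, mul_kronecker_mul]

lemma kronecker_mulVec_apply {R l m n p : Type*} [Semiring R] [Fintype m] [Fintype n]
    (A : Matrix l m R) (B : Matrix p n R) (x : m × n → R) (i : l) (a : p) :
    ((A ⊗ₖ B) *ᵥ x) (i, a) = (A *ᵥ fun j => (B *ᵥ fun b => x (j, b)) a) i := by
  simp only [mulVec, dotProduct, Fintype.sum_prod_type, kroneckerMap_apply, Finset.mul_sum,
    mul_assoc]

lemma inv_one_sub_eq_geom_sum {R n : Type*} [CommRing R] [Fintype n] [DecidableEq n]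
    {T : Matrix n n R} {k : ℕ} (hT : T ^ k = 0) :
    (1 - T)⁻¹ = ∑ i ∈ Finset.range k, T ^ i :=
  inv_eq_right_inv (by rw [mul_neg_geom_sum, hT, sub_zero])

section NormedRing

variable {R : Type*} [SeminormedRing R] {a : R}

-- `‖1‖ ≤ 1` rather than `NormOneClass R`, so that matrices over an empty index type are covered.
lemma norm_pow_le_one (h_one : ‖(1 : R)‖ ≤ 1) (ha : ‖a‖ ≤ 1) (k : ℕ) : ‖a ^ k‖ ≤ 1 := by
  rcases k.eq_zero_or_pos with rfl | hk
  · rwa [pow_zero]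
  · exact (norm_pow_le' a hk).trans (pow_le_one₀ (norm_nonneg a) ha)

lemma norm_geom_sum_le (h_one : ‖(1 : R)‖ ≤ 1) (ha : ‖a‖ ≤ 1) (k : ℕ) :
    ‖∑ i ∈ Finset.range k, a ^ i‖ ≤ k := by
  simpa using norm_sum_le_of_le (Finset.range k) fun i _ => norm_pow_le_one h_one ha i

end NormedRing

section L2OpNorm

open scoped Matrix.Norms.L2Operator

variable {𝕜 l m n p : Type*} [RCLike 𝕜] [Fintype l] [Fintype m] [DecidableEq m] [Fintype n]
  [DecidableEq n] [Fintype p]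

lemma specNorm_eq_l2_opNorm (A : Matrix n n 𝕜) : specNorm A = ‖A‖ := rfl

lemma l2_opNorm_one_le : ‖(1 : Matrix n n 𝕜)‖ ≤ 1 := by
  rw [← diagonal_one, l2_opNorm_diagonal]
  simpa using pi_norm_const_le (ι := n) (1 : 𝕜)

lemma sum_norm_mulVec_sq_le (A : Matrix l m 𝕜) (x : m → 𝕜) :
    ∑ i, ‖(A *ᵥ x) i‖ ^ 2 ≤ ‖A‖ ^ 2 * ∑ j, ‖x j‖ ^ 2 := by
  have h := pow_le_pow_left₀ (norm_nonneg _) (l2_opNorm_mulVec A (WithLp.toLp 2 x)) 2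
  rwa [mul_pow, EuclideanSpace.norm_sq_eq, EuclideanSpace.norm_sq_eq] at h

-- Apply `B` along the second index and then `A` along the first.
lemma l2_opNorm_kronecker_le (A : Matrix l m 𝕜) (B : Matrix p n 𝕜) :
    ‖A ⊗ₖ B‖ ≤ ‖A‖ * ‖B‖ := by
  refine ContinuousLinearMap.opNorm_le_bound _ (by positivity) fun x => ?_
  refine (sq_le_sq₀ (by positivity) (by positivity)).mp ?_
  let y (j : m) : p → 𝕜 := B *ᵥ fun b => x (j, b)
  rw [EuclideanSpace.norm_sq_eq, mul_pow, EuclideanSpace.norm_sq_eq]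
  calc ∑ ia, ‖((A ⊗ₖ B) *ᵥ x.ofLp) ia‖ ^ 2
      = ∑ a, ∑ i, ‖(A *ᵥ fun j => y j a) i‖ ^ 2 := by
        simp only [Fintype.sum_prod_type_right, kronecker_mulVec_apply, y]
    _ ≤ ∑ a, ‖A‖ ^ 2 * ∑ j, ‖y j a‖ ^ 2 :=
        Finset.sum_le_sum fun a _ => sum_norm_mulVec_sq_le A fun j => y j a
    _ = ‖A‖ ^ 2 * ∑ j, ∑ a, ‖y j a‖ ^ 2 := by rw [← Finset.mul_sum, Finset.sum_comm]
    _ ≤ ‖A‖ ^ 2 * ∑ j, ‖B‖ ^ 2 * ∑ b, ‖x (j, b)‖ ^ 2 := by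
        gcongr with j
        exact sum_norm_mulVec_sq_le B fun b => x (j, b)
    _ = (‖A‖ * ‖B‖) ^ 2 * ∑ jb, ‖x jb‖ ^ 2 := by
        rw [← Finset.mul_sum, Fintype.sum_prod_type, mul_pow, mul_assoc]

lemma l2_opNorm_one_sub_le_two {T : Matrix n n 𝕜} (hT : ‖T‖ ≤ 1) : ‖1 - T‖ ≤ 2 :=
  calc ‖1 - T‖ ≤ ‖(1 : Matrix n n 𝕜)‖ + ‖T‖ := norm_sub_le 1 T
    _ ≤ 1 + 1 := add_le_add l2_opNorm_one_le hT
    _ = 2 := one_add_one_eq_two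

lemma l2_opNorm_inv_one_sub_le {T : Matrix n n 𝕜} {k : ℕ} (hT : ‖T‖ ≤ 1) (hTk : T ^ k = 0) :
    ‖(1 - T)⁻¹‖ ≤ k := by
  rw [inv_one_sub_eq_geom_sum hTk]
  exact norm_geom_sum_le l2_opNorm_one_le hT k

theorem stmt12_general {A : Matrix m m 𝕜} {B : Matrix n n 𝕜} {k : ℕ}
    (hA : specNorm A ≤ 1) (hAk : A ^ k = 0) (hB : specNorm B ≤ 1) :
    specNorm (1 - A ⊗ₖ B) ≤ 2 ∧ specNorm (1 - A ⊗ₖ B)⁻¹ ≤ k ∧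
      specNorm (1 - A ⊗ₖ B) * specNorm (1 - A ⊗ₖ B)⁻¹ ≤ 2 * k := by
  simp only [specNorm_eq_l2_opNorm] at *
  have h_contraction : ‖A ⊗ₖ B‖ ≤ 1 :=
    (l2_opNorm_kronecker_le A B).trans (mul_le_one₀ hA (norm_nonneg B) hB)
  have h_nilpotent : (A ⊗ₖ B) ^ k = 0 := by rw [kronecker_pow, hAk, zero_kronecker]
  have h_norm := l2_opNorm_one_sub_le_two h_contraction
  have h_inv := l2_opNorm_inv_one_sub_le h_contraction h_nilpotent
  exact ⟨h_norm, h_inv, mul_le_mul h_norm h_inv (norm_nonneg _) zero_le_two⟩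

end L2OpNorm

section Shift

variable (M : ℕ)

lemma shiftMatrix_pow_self : shiftMatrix M ^ M = 0 :=
  pow_eq_zero_of_strictly_triangular (fun i : Fin M => (i : ℕ))
    (fun i j hij => if_neg (by omega)) Fin.isLt

lemma conjTranspose_shiftMatrix_mul_self :
    (shiftMatrix M)ᴴ * shiftMatrix M =
      diagonal fun j : Fin M => if (j : ℕ) + 1 < M then 1 else 0 := by
  ext j k
  simp only [mul_apply, conjTranspose_apply, shiftMatrix, of_apply, star_trivial, diagonal_apply,
    ← ite_and, mul_ite, mul_one, mul_zero]
  by_cases hjk : j = k ∧ (j : ℕ) + 1 < M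
  · obtain ⟨rfl, hj⟩ := hjk
    rw [Finset.sum_eq_single ⟨j + 1, hj⟩ (fun i _ hi => if_neg fun h => hi (Fin.ext h.1)) (by simp)]
    simp [hj]
  · rw [if_neg hjk]
    exact Finset.sum_eq_zero fun i _ => if_neg (by omega)

open scoped Matrix.Norms.L2Operator in
lemma specNorm_shiftMatrix_le_one : specNorm (shiftMatrix M) ≤ 1 := by
  rw [specNorm_eq_l2_opNorm, ← sq_le_one_iff₀ (norm_nonneg _), sq,
    ← l2_opNorm_conjTranspose_mul_self, conjTranspose_shiftMatrix_mul_self, l2_opNorm_diagonal,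
    pi_norm_le_iff_of_nonneg zero_le_one]
  intro j
  split_ifs <;> simp

end Shift

theorem stmt12 {M N : ℕ} (hM : 1 ≤ M) (hN : 1 ≤ N)
    (B : Matrix (Fin N) (Fin N) ℝ) (hB : specNorm B ≤ 1) :
    specNorm ((1 : Matrix (Fin M × Fin N) (Fin M × Fin N) ℝ) - shiftMatrix M ⊗ₖ B) ≤ 2 ∧
      specNorm ((1 : Matrix (Fin M × Fin N) (Fin M × Fin N) ℝ) - shiftMatrix M ⊗ₖ B)⁻¹
        ≤ (M : ℝ) ∧
      specNorm ((1 : Matrix (Fin M × Fin N) (Fin M × Fin N) ℝ) - shiftMatrix M ⊗ₖ B) *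
          specNorm ((1 : Matrix (Fin M × Fin N) (Fin M × Fin N) ℝ) - shiftMatrix M ⊗ₖ B)⁻¹
        ≤ 2 * (M : ℝ) :=
  stmt12_general (specNorm_shiftMatrix_le_one M) (shiftMatrix_pow_self M) hB
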